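/- Let $(S,\mathcal L)$ be a linear space: $\mathcal L$ is a nonempty family of subsets of $S$ (lines), each with at least $3$ elements, such that any two distinct points of $S$ lie on exactly one common line. Let $V_2(S,\mathcal L)$ be the Veronese space whose points are the multisets of size $2$ with elements in $S$ and whose blocks are the sets $a+B=\{a+x : x\in B\}$ and $2B=\{2x : x\in B\}$ with $a\in S$, $B\in\mathcal L$. Two points are adjacent if some block contains both. The leaves are the sets $a+S$ ($a\in S$) and $2S$; every block is contained in exactly one leaf. Say that two blocks cross if they share a point and lie in distinct leaves. Let $L_1,K_1,L_2,K_2$ be blocks forming a proper quadrangle, i.e. they lie in pairwise distinct leaves and there are four pairwise distinct points $p_1\in L_1\cap K_1$, $p_2\in K_1\cap L_2$, $p_3\in L_2\cap K_2$, $p_4\in K_2\cap L_1$ such that $p_1,p_3$ are not adjacent and $p_2,p_4$ are not adjacent. If a block $L_3$ crosses both $K_1$ and $K_2$, and a block $K_3$ crosses both $L_1$ and $L_2$, then $K_3$ and $L_3$ share a point. -/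

import Mathlib

def AtLeastThree {α : Type*} (B : Set α) : Prop :=
  ∃ a b c, a ∈ B ∧ b ∈ B ∧ c ∈ B ∧ a ≠ b ∧ a ≠ c ∧ b ≠ c

def IsPLS {α : Type*} (L : Set (Set α)) : Prop :=
  L.Nonempty ∧ (∀ B ∈ L, AtLeastThree B) ∧
    ∀ p q : α, p ≠ q → ∀ B₁ ∈ L, ∀ B₂ ∈ L,
      p ∈ B₁ → q ∈ B₁ → p ∈ B₂ → q ∈ B₂ → B₁ = B₂

def IsLinearSpace {α : Type*} (L : Set (Set α)) : Prop :=
  IsPLS L ∧ ∀ p q : α, p ≠ q → ∃ B ∈ L, p ∈ B ∧ q ∈ B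

/-- The set `e + r·B = {e + r·x : x ∈ B}`. -/
def veroBlock {S : Type*} (e : Multiset S) (r : ℕ) (B : Set S) : Set (Multiset S) :=
  { m | ∃ x ∈ B, m = e + Multiset.replicate r x }

/-- The blocks of the `k`-th Veronese space over `(S, L)`; its points are the multisets of
cardinality `k`. -/
def veroBlocks {S : Type*} (k : ℕ) (L : Set (Set S)) : Set (Set (Multiset S)) :=
  { Bl | ∃ (r : ℕ) (e : Multiset S) (B : Set S),
      0 < r ∧ r ≤ k ∧ Multiset.card e = k - r ∧ B ∈ L ∧ Bl = veroBlock e r B }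

/-- The leaves `e + r·S` of the `k`-th Veronese space over a structure with point set `S`. -/
def veroLeaves (S : Type*) (k : ℕ) : Set (Set (Multiset S)) :=
  { T | ∃ (r : ℕ) (e : Multiset S),
      0 < r ∧ r ≤ k ∧ Multiset.card e = k - r ∧ T = veroBlock e r Set.univ }

/-- Two points are adjacent if some block contains both. -/
def VerAdj {S : Type*} (k : ℕ) (L : Set (Set S)) (f g : Multiset S) : Prop :=
  ∃ Bl ∈ veroBlocks k L, f ∈ Bl ∧ g ∈ Bl

/-- The leaves containing `A` and `B` are distinct (every block lies in exactly one leaf):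
no leaf contains both. -/
def InDistinctLeaves {S : Type*} (k : ℕ) (A B : Set (Multiset S)) : Prop :=
  ¬ ∃ T ∈ veroLeaves S k, A ⊆ T ∧ B ⊆ T

/-- `A` crosses `B`: they share a point and lie in distinct leaves. -/
def VeroCross {S : Type*} (k : ℕ) (A B : Set (Multiset S)) : Prop :=
  (A ∩ B).Nonempty ∧ InDistinctLeaves k A B

/-- Blocks `L₁, K₁, L₂, K₂` form a quadrangle without diagonals. -/
def IsQuadrangleWithoutDiagonals {S : Type*} (k : ℕ) (L : Set (Set S))
    (L₁ K₁ L₂ K₂ : Set (Multiset S)) : Prop :=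
  L₁ ∈ veroBlocks k L ∧ K₁ ∈ veroBlocks k L ∧ L₂ ∈ veroBlocks k L ∧ K₂ ∈ veroBlocks k L ∧
  ∃ p₁ p₂ p₃ p₄ : Multiset S,
    (p₁ ≠ p₂ ∧ p₁ ≠ p₃ ∧ p₁ ≠ p₄ ∧ p₂ ≠ p₃ ∧ p₂ ≠ p₄ ∧ p₃ ≠ p₄) ∧
    p₁ ∈ L₁ ∩ K₁ ∧ p₂ ∈ K₁ ∩ L₂ ∧ p₃ ∈ L₂ ∩ K₂ ∧ p₄ ∈ K₂ ∩ L₁ ∧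
    ¬ VerAdj k L p₁ p₃ ∧ ¬ VerAdj k L p₂ p₄

/-- A quadrangle without diagonals is proper if its sides lie in pairwise distinct leaves. -/
def IsProperQuadrangle {S : Type*} (k : ℕ) (L : Set (Set S))
    (L₁ K₁ L₂ K₂ : Set (Multiset S)) : Prop :=
  IsQuadrangleWithoutDiagonals k L L₁ K₁ L₂ K₂ ∧
    InDistinctLeaves k L₁ K₁ ∧ InDistinctLeaves k L₁ L₂ ∧ InDistinctLeaves k L₁ K₂ ∧
    InDistinctLeaves k K₁ L₂ ∧ InDistinctLeaves k K₁ K₂ ∧ InDistinctLeaves k L₂ K₂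

/-! The leaves of `V₂(S, ℒ)` are indexed by `Option S`, `some a` standing for `a + S` and `none` for
`2S`, and two distinct leaves `u`, `v` meet in exactly one point. A block over the line `B` in the
leaf `u` contains that point iff `b ∈ B` when `v = some b`, and iff `a ∈ B` when `u = some a`,
`v = none`. If no side of the quadrangle lies in `2S`, each `Lᵢ` lies over the line through the
indices of `K₁` and `K₂`, each `Kⱼ` over the line through the indices of `L₁` and `L₂`, and the two
lines coincide as soon as `L₃` or `K₃` lies in `2S`. Otherwise one may take `L₁` in `2S`; the `Lᵢ`
then still lie over one line `A`, and unless `L₃` lies in the leaf of `L₁` or `L₂` the `Kⱼ` lie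
over `A` as well. -/

section Leaves

variable {S : Type*} {ℒ : Set (Set S)} {A B C : Set S} {u v : Option S} {a b : S}

/-- The block over `B` in the leaf of `V₂(S, ℒ)` with index `u`: `a + B` for `u = some a`, and `2B`
for `u = none`, since `none.getD x = x`. One formula for both kinds lets arguments about crossing
blocks run over the index alone. -/
def leafBlock (u : Option S) (B : Set S) : Set (Multiset S) :=
  (fun x ↦ {u.getD x, x}) '' B

theorem leafBlock_some (a : S) (B : Set S) : leafBlock (some a) B = veroBlock {a} 1 B := by
  ext m
  simp only [leafBlock, veroBlock, Set.mem_image, Set.mem_ofPred_eq, eq_comm (a := m)]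
  rfl

theorem leafBlock_none (B : Set S) : leafBlock none B = veroBlock 0 2 B := by
  ext m
  simp only [leafBlock, veroBlock, Set.mem_image, Set.mem_ofPred_eq, eq_comm (a := m), zero_add]
  rfl

theorem mem_veroBlocks_two_iff {X : Set (Multiset S)} :
    X ∈ veroBlocks 2 ℒ ↔ ∃ u, ∃ B ∈ ℒ, X = leafBlock u B := by
  constructor
  · rintro ⟨r, e, B, hr, hr', he, hB, rfl⟩
    interval_cases r
    · obtain ⟨a, rfl⟩ := Multiset.card_eq_one.1 he
      exact ⟨some a, B, hB, (leafBlock_some a B).symm⟩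
    · obtain rfl := Multiset.card_eq_zero.1 he
      exact ⟨none, B, hB, (leafBlock_none B).symm⟩
  · rintro ⟨_ | a, B, hB, rfl⟩
    · exact ⟨2, 0, B, two_pos, le_rfl, rfl, hB, leafBlock_none B⟩
    · exact ⟨1, {a}, B, one_pos, one_le_two, rfl, hB, leafBlock_some a B⟩

theorem veroLeaves_eq_veroBlocks_univ (S : Type*) (k : ℕ) :
    veroLeaves S k = veroBlocks k {Set.univ} := by
  simp [veroLeaves, veroBlocks]

theorem leafBlock_univ_mem_veroLeaves (u : Option S) :
    leafBlock u Set.univ ∈ veroLeaves S 2 := by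
  rw [veroLeaves_eq_veroBlocks_univ, mem_veroBlocks_two_iff]
  exact ⟨u, _, rfl, rfl⟩

theorem InDistinctLeaves.symm {k : ℕ} {X Y : Set (Multiset S)} (h : InDistinctLeaves k X Y) :
    InDistinctLeaves k Y X :=
  fun ⟨T, hT, hY, hX⟩ ↦ h ⟨T, hT, hX, hY⟩

theorem InDistinctLeaves.index_ne (h : InDistinctLeaves 2 (leafBlock u B) (leafBlock v C)) :
    u ≠ v := by
  rintro rfl
  exact h ⟨_, leafBlock_univ_mem_veroLeaves u, Set.image_mono (Set.subset_univ B),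
    Set.image_mono (Set.subset_univ C)⟩

theorem VeroCross.symm {k : ℕ} {X Y : Set (Multiset S)} (h : VeroCross k X Y) :
    VeroCross k Y X :=
  ⟨Set.inter_comm X Y ▸ h.1, h.2.symm⟩

theorem VeroCross.mem_of_some_right
    (h : VeroCross 2 (leafBlock u B) (leafBlock (some b) C)) : b ∈ B := by
  obtain ⟨⟨_, ⟨x, hx, rfl⟩, y, -, hxy : ({b, y} : Multiset S) = {u.getD x, x}⟩, hd⟩ := h
  have hb : b ∈ ({u.getD x, x} : Multiset S) := hxy ▸ Multiset.mem_cons_self b {y}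
  obtain hbu | rfl : b = u.getD x ∨ b = x := by simpa using hb
  · cases u with
    | none => exact hbu ▸ hx
    | some a => exact absurd (congrArg some hbu.symm) hd.index_ne
  · exact hx

theorem VeroCross.mem_of_none_right
    (h : VeroCross 2 (leafBlock (some a) B) (leafBlock none C)) : a ∈ B := by
  obtain ⟨⟨_, ⟨x, hx, rfl⟩, y, -, hxy : ({y, y} : Multiset S) = {a, x}⟩, -⟩ := h
  have hy : ∀ z ∈ ({a, x} : Multiset S), z = y := by simp [← hxy]
  have hax : a = x := (hy a (by simp)).trans (hy x (by simp)).symm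
  exact hax ▸ hx

theorem leafBlock_some_inter_leafBlock_some_nonempty (hb : b ∈ B) (ha : a ∈ C) :
    (leafBlock (some a) B ∩ leafBlock (some b) C).Nonempty :=
  ⟨{a, b}, ⟨b, hb, rfl⟩, a, ha, Multiset.pair_comm b a⟩

theorem leafBlock_inter_leafBlock_none_nonempty (hu : u = none ∨ u = some a)
    (hB : a ∈ B) (hC : a ∈ C) : (leafBlock u B ∩ leafBlock none C).Nonempty :=
  ⟨{a, a}, ⟨a, hB, by obtain rfl | rfl := hu <;> rfl⟩, a, hC, rfl⟩

end Leaves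

section Grid

variable {S : Type*} {ℒ : Set (Set S)} {A A' A₁ A₂ A₃ B B₁ B₂ B₃ : Set S}
  {l l' l₃ k₃ : Option S} {a a₁ a₂ b₁ b₂ : S}

theorem IsPLS.pairwise_inter_subsingleton (h : IsPLS ℒ) :
    ℒ.Pairwise fun A B ↦ (A ∩ B).Subsingleton := by
  intro A hA B hB hAB p hp q hq
  by_contra hpq
  exact hAB (h.2.2 p q hpq A hA B hB hp.1 hq.1 hp.2 hq.2)

theorem eq_of_two_common_points (hℒ : ℒ.Pairwise fun A B ↦ (A ∩ B).Subsingleton)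
    (hA : A ∈ ℒ) (hB : B ∈ ℒ) (hab : a₁ ≠ a₂) (h₁A : a₁ ∈ A) (h₂A : a₂ ∈ A)
    (h₁B : a₁ ∈ B) (h₂B : a₂ ∈ B) : A = B :=
  hℒ.eq hA hB fun h ↦ hab (h ⟨h₁A, h₁B⟩ ⟨h₂A, h₂B⟩)

theorem base_eq_of_cross_of_cross (hℒ : ℒ.Pairwise fun A B ↦ (A ∩ B).Subsingleton)
    (hA : A ∈ ℒ) (hA' : A' ∈ ℒ) (hb : b₁ ≠ b₂)
    (h₁ : VeroCross 2 (leafBlock l A) (leafBlock (some b₁) B₁))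
    (h₂ : VeroCross 2 (leafBlock l A) (leafBlock (some b₂) B₂))
    (h₁' : VeroCross 2 (leafBlock l' A') (leafBlock (some b₁) B₁))
    (h₂' : VeroCross 2 (leafBlock l' A') (leafBlock (some b₂) B₂)) : A = A' :=
  eq_of_two_common_points hℒ hA hA' hb h₁.mem_of_some_right h₂.mem_of_some_right
    h₁'.mem_of_some_right h₂'.mem_of_some_right

theorem inter_nonempty_of_common_bases (hℒ : ℒ.Pairwise fun A B ↦ (A ∩ B).Subsingleton)
    (hA : A ∈ ℒ) (hB : B ∈ ℒ) (ha : a₁ ≠ a₂) (hb : b₁ ≠ b₂)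
    (h₁₁ : VeroCross 2 (leafBlock (some a₁) A) (leafBlock (some b₁) B))
    (h₁₂ : VeroCross 2 (leafBlock (some a₁) A) (leafBlock (some b₂) B))
    (h₂₁ : VeroCross 2 (leafBlock (some a₂) A) (leafBlock (some b₁) B))
    (h₁₃ : VeroCross 2 (leafBlock (some a₁) A) (leafBlock k₃ B))
    (h₂₃ : VeroCross 2 (leafBlock (some a₂) A) (leafBlock k₃ B))
    (h₃₁ : VeroCross 2 (leafBlock l₃ A) (leafBlock (some b₁) B))
    (h₃₂ : VeroCross 2 (leafBlock l₃ A) (leafBlock (some b₂) B)) :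
    (leafBlock l₃ A ∩ leafBlock k₃ B).Nonempty := by
  have ha₁B : a₁ ∈ B := h₁₁.symm.mem_of_some_right
  have ha₂B : a₂ ∈ B := h₂₁.symm.mem_of_some_right
  have hb₁A : b₁ ∈ A := h₁₁.mem_of_some_right
  have hb₂A : b₂ ∈ A := h₁₂.mem_of_some_right
  cases k₃ with
  | none =>
    obtain rfl : A = B := eq_of_two_common_points hℒ hA hB ha
      h₁₃.mem_of_none_right h₂₃.mem_of_none_right ha₁B ha₂B
    cases l₃ with
    | none => exact leafBlock_inter_leafBlock_none_nonempty (.inl rfl) ha₁B ha₁B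
    | some d =>
      have hd : d ∈ A := h₃₁.symm.mem_of_some_right
      exact leafBlock_inter_leafBlock_none_nonempty (.inr rfl) hd hd
  | some c =>
    have hc : c ∈ A := h₁₃.mem_of_some_right
    cases l₃ with
    | none =>
      obtain rfl : A = B := eq_of_two_common_points hℒ hA hB hb
        hb₁A hb₂A h₃₁.symm.mem_of_none_right h₃₂.symm.mem_of_none_right
      rw [Set.inter_comm]
      exact leafBlock_inter_leafBlock_none_nonempty (.inr rfl) hc hc
    | some d =>
      exact leafBlock_some_inter_leafBlock_some_nonempty hc h₃₁.symm.mem_of_some_right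

theorem inter_nonempty_of_index_ne_none (hℒ : ℒ.Pairwise fun A B ↦ (A ∩ B).Subsingleton)
    (hA₁ : A₁ ∈ ℒ) (hA₂ : A₂ ∈ ℒ) (hA₃ : A₃ ∈ ℒ) (hB₁ : B₁ ∈ ℒ) (hB₂ : B₂ ∈ ℒ) (hB₃ : B₃ ∈ ℒ)
    (ha : a₁ ≠ a₂) (hb : b₁ ≠ b₂)
    (h₁₁ : VeroCross 2 (leafBlock (some a₁) A₁) (leafBlock (some b₁) B₁))
    (h₁₂ : VeroCross 2 (leafBlock (some a₁) A₁) (leafBlock (some b₂) B₂))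
    (h₂₁ : VeroCross 2 (leafBlock (some a₂) A₂) (leafBlock (some b₁) B₁))
    (h₂₂ : VeroCross 2 (leafBlock (some a₂) A₂) (leafBlock (some b₂) B₂))
    (h₁₃ : VeroCross 2 (leafBlock (some a₁) A₁) (leafBlock k₃ B₃))
    (h₂₃ : VeroCross 2 (leafBlock (some a₂) A₂) (leafBlock k₃ B₃))
    (h₃₁ : VeroCross 2 (leafBlock l₃ A₃) (leafBlock (some b₁) B₁))
    (h₃₂ : VeroCross 2 (leafBlock l₃ A₃) (leafBlock (some b₂) B₂)) :
    (leafBlock l₃ A₃ ∩ leafBlock k₃ B₃).Nonempty := by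
  obtain rfl : A₁ = A₂ := base_eq_of_cross_of_cross hℒ hA₁ hA₂ hb h₁₁ h₁₂ h₂₁ h₂₂
  obtain rfl : A₁ = A₃ := base_eq_of_cross_of_cross hℒ hA₁ hA₃ hb h₁₁ h₁₂ h₃₁ h₃₂
  obtain rfl : B₁ = B₂ :=
    base_eq_of_cross_of_cross hℒ hB₁ hB₂ ha h₁₁.symm h₂₁.symm h₁₂.symm h₂₂.symm
  obtain rfl : B₁ = B₃ :=
    base_eq_of_cross_of_cross hℒ hB₁ hB₃ ha h₁₁.symm h₂₁.symm h₁₃.symm h₂₃.symm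
  exact inter_nonempty_of_common_bases hℒ hA₁ hB₁ ha hb h₁₁ h₁₂ h₂₁ h₁₃ h₂₃ h₃₁ h₃₂

theorem inter_nonempty_of_index_eq_none (hℒ : ℒ.Pairwise fun A B ↦ (A ∩ B).Subsingleton)
    (hA₁ : A₁ ∈ ℒ) (hA₃ : A₃ ∈ ℒ) (hB₁ : B₁ ∈ ℒ) (hB₂ : B₂ ∈ ℒ) (hB₃ : B₃ ∈ ℒ)
    {k₁ k₂ : Option S} (hl : l ≠ none) (hk : k₁ ≠ k₂)
    (h₁₁ : VeroCross 2 (leafBlock none A₁) (leafBlock k₁ B₁))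
    (h₁₂ : VeroCross 2 (leafBlock none A₁) (leafBlock k₂ B₂))
    (h₂₁ : VeroCross 2 (leafBlock l A₂) (leafBlock k₁ B₁))
    (h₂₂ : VeroCross 2 (leafBlock l A₂) (leafBlock k₂ B₂))
    (h₁₃ : VeroCross 2 (leafBlock none A₁) (leafBlock k₃ B₃))
    (h₂₃ : VeroCross 2 (leafBlock l A₂) (leafBlock k₃ B₃))
    (h₃₁ : VeroCross 2 (leafBlock l₃ A₃) (leafBlock k₁ B₁))
    (h₃₂ : VeroCross 2 (leafBlock l₃ A₃) (leafBlock k₂ B₂)) :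
    (leafBlock l₃ A₃ ∩ leafBlock k₃ B₃).Nonempty := by
  obtain ⟨a, rfl⟩ := Option.ne_none_iff_exists'.1 hl
  obtain ⟨b₁, rfl⟩ := Option.ne_none_iff_exists'.1 h₁₁.2.index_ne.symm
  obtain ⟨b₂, rfl⟩ := Option.ne_none_iff_exists'.1 h₁₂.2.index_ne.symm
  obtain ⟨c, rfl⟩ := Option.ne_none_iff_exists'.1 h₁₃.2.index_ne.symm
  have hb : b₁ ≠ b₂ := mt (congrArg some) hk
  have hac : a ≠ c := mt (congrArg some) h₂₃.2.index_ne
  obtain rfl : A₁ = A₃ := base_eq_of_cross_of_cross hℒ hA₁ hA₃ hb h₁₁ h₁₂ h₃₁ h₃₂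
  have hcA : c ∈ A₁ := h₁₃.mem_of_some_right
  have hcB : c ∈ B₃ := h₁₃.symm.mem_of_none_right
  have haB : a ∈ B₃ := h₂₃.symm.mem_of_some_right
  cases l₃ with
  | none =>
    rw [Set.inter_comm]
    exact leafBlock_inter_leafBlock_none_nonempty (.inr rfl) hcB hcA
  | some d =>
    suffices d ∈ B₃ from leafBlock_some_inter_leafBlock_some_nonempty hcA this
    obtain rfl | had := eq_or_ne a d
    · exact haB
    have haB₁ : a ∈ B₁ := h₂₁.symm.mem_of_some_right
    have hdB₁ : d ∈ B₁ := h₃₁.symm.mem_of_some_right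
    obtain rfl : B₁ = B₂ := base_eq_of_cross_of_cross hℒ hB₁ hB₂ had
      h₂₁.symm h₃₁.symm h₂₂.symm h₃₂.symm
    obtain rfl : B₁ = A₁ := eq_of_two_common_points hℒ hB₁ hA₁ hb h₁₁.symm.mem_of_none_right
      h₁₂.symm.mem_of_none_right h₁₁.mem_of_some_right h₁₂.mem_of_some_right
    obtain rfl : B₁ = B₃ := eq_of_two_common_points hℒ hB₁ hB₃ hac haB₁ hcA haB hcB
    exact hdB₁

theorem stmt_7_general (hℒ : ℒ.Pairwise fun A B ↦ (A ∩ B).Subsingleton)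
    {L₁ L₂ L₃ K₁ K₂ K₃ : Set (Multiset S)}
    (hL₁ : L₁ ∈ veroBlocks 2 ℒ) (hL₂ : L₂ ∈ veroBlocks 2 ℒ) (hL₃ : L₃ ∈ veroBlocks 2 ℒ)
    (hK₁ : K₁ ∈ veroBlocks 2 ℒ) (hK₂ : K₂ ∈ veroBlocks 2 ℒ) (hK₃ : K₃ ∈ veroBlocks 2 ℒ)
    (hL : InDistinctLeaves 2 L₁ L₂) (hK : InDistinctLeaves 2 K₁ K₂)
    (h₁₁ : VeroCross 2 L₁ K₁) (h₁₂ : VeroCross 2 L₁ K₂)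
    (h₂₁ : VeroCross 2 L₂ K₁) (h₂₂ : VeroCross 2 L₂ K₂)
    (h₁₃ : VeroCross 2 L₁ K₃) (h₂₃ : VeroCross 2 L₂ K₃)
    (h₃₁ : VeroCross 2 L₃ K₁) (h₃₂ : VeroCross 2 L₃ K₂) :
    (L₃ ∩ K₃).Nonempty := by
  obtain ⟨l₁, A₁, hA₁, rfl⟩ := mem_veroBlocks_two_iff.1 hL₁
  obtain ⟨l₂, A₂, hA₂, rfl⟩ := mem_veroBlocks_two_iff.1 hL₂
  obtain ⟨l₃, A₃, hA₃, rfl⟩ := mem_veroBlocks_two_iff.1 hL₃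
  obtain ⟨k₁, B₁, hB₁, rfl⟩ := mem_veroBlocks_two_iff.1 hK₁
  obtain ⟨k₂, B₂, hB₂, rfl⟩ := mem_veroBlocks_two_iff.1 hK₂
  obtain ⟨k₃, B₃, hB₃, rfl⟩ := mem_veroBlocks_two_iff.1 hK₃
  have hl : l₁ ≠ l₂ := hL.index_ne
  have hk : k₁ ≠ k₂ := hK.index_ne
  obtain _ | a₁ := l₁
  · exact inter_nonempty_of_index_eq_none hℒ hA₁ hA₃ hB₁ hB₂ hB₃ hl.symm hk
      h₁₁ h₁₂ h₂₁ h₂₂ h₁₃ h₂₃ h₃₁ h₃₂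
  obtain _ | a₂ := l₂
  · exact inter_nonempty_of_index_eq_none hℒ hA₂ hA₃ hB₁ hB₂ hB₃ hl hk
      h₂₁ h₂₂ h₁₁ h₁₂ h₂₃ h₁₃ h₃₁ h₃₂
  obtain _ | b₁ := k₁
  · rw [Set.inter_comm]
    exact inter_nonempty_of_index_eq_none hℒ hB₁ hB₃ hA₁ hA₂ hA₃ hk.symm hl
      h₁₁.symm h₂₁.symm h₁₂.symm h₂₂.symm h₃₁.symm h₃₂.symm h₁₃.symm h₂₃.symm
  obtain _ | b₂ := k₂
  · rw [Set.inter_comm]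
    exact inter_nonempty_of_index_eq_none hℒ hB₂ hB₃ hA₁ hA₂ hA₃ hk hl
      h₁₂.symm h₂₂.symm h₁₁.symm h₂₁.symm h₃₂.symm h₃₁.symm h₁₃.symm h₂₃.symm
  exact inter_nonempty_of_index_ne_none hℒ hA₁ hA₂ hA₃ hB₁ hB₂ hB₃
    (mt (congrArg some) hl) (mt (congrArg some) hk) h₁₁ h₁₂ h₂₁ h₂₂ h₁₃ h₂₃ h₃₁ h₃₂

end Grid

theorem stmt_7 {S : Type*} (ℒ : Set (Set S)) (hL : IsLinearSpace ℒ)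
    (L₁ K₁ L₂ K₂ : Set (Multiset S)) (hQ : IsProperQuadrangle 2 ℒ L₁ K₁ L₂ K₂)
    (L₃ K₃ : Set (Multiset S)) (hL₃ : L₃ ∈ veroBlocks 2 ℒ) (hK₃ : K₃ ∈ veroBlocks 2 ℒ)
    (hL₃K₁ : VeroCross 2 L₃ K₁) (hL₃K₂ : VeroCross 2 L₃ K₂)
    (hK₃L₁ : VeroCross 2 K₃ L₁) (hK₃L₂ : VeroCross 2 K₃ L₂) :
    (K₃ ∩ L₃).Nonempty := by
  obtain ⟨⟨hL₁, hK₁, hL₂, hK₂, p₁, p₂, p₃, p₄, -, h₁, h₂, h₃, h₄, -⟩,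
    dL₁K₁, dL, dL₁K₂, dK₁L₂, dK, dL₂K₂⟩ := hQ
  rw [Set.inter_comm]
  exact stmt_7_general hL.1.pairwise_inter_subsingleton hL₁ hL₂ hL₃ hK₁ hK₂ hK₃ dL dK
    ⟨⟨p₁, h₁⟩, dL₁K₁⟩ ⟨⟨p₄, h₄.symm⟩, dL₁K₂⟩ ⟨⟨p₂, h₂.symm⟩, dK₁L₂.symm⟩ ⟨⟨p₃, h₃⟩, dL₂K₂⟩
    hK₃L₁.symm hK₃L₂.symm hL₃K₁ hL₃K₂
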